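/- arXiv:2401.05927 — 2 statements merged into one kernel-verified Lean document; each statement's English description precedes it below -/
import Mathlib

section
/- Let R be a commutative local ring with maximal ideal 𝔪, let I ⊆ R be an ideal, and let n ≥ 1 and k ≥ 1. Then for every matrix x ∈ SL_n(R/I) whose image in SL_n(R/(I + 𝔪^k)) is the identity matrix, there exists c ∈ SL_n(R) such that the entrywise image of c in SL_n(R/I) equals x and the image of c in SL_n(R/𝔪^k) is the identity matrix. -/
/-!
The quotient `R ⧸ (I ⊓ J)` is the fibre product of `R ⧸ I` and `R ⧸ J` over `R ⧸ (I ⊔ J)`, so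
matrices of determinant one over `R ⧸ I` and `R ⧸ J` that agree over `R ⧸ (I ⊔ J)` glue to one over
`R ⧸ (I ⊓ J)`. If `I ⊓ J` lies in the Jacobson radical, then any lift of the glued matrix to `R` has
a unit determinant congruent to one, and rescaling a single row makes the determinant equal to one
without changing the reduction. The theorem is the case `J = 𝔪 ^ k`, with the identity over `R ⧸ J`.
-/

open Matrix

section Gluing

variable {R : Type*} [CommRing R] {I J : Ideal R}

theorem exists_factor_inf_eq {a : R ⧸ I} {b : R ⧸ J}
    (hab : Ideal.Quotient.factor (le_sup_left : I ≤ I ⊔ J) a =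
      Ideal.Quotient.factor (le_sup_right : J ≤ I ⊔ J) b) :
    ∃ r : R ⧸ I ⊓ J, Ideal.Quotient.factor inf_le_left r = a ∧
      Ideal.Quotient.factor inf_le_right r = b := by
  obtain ⟨a, rfl⟩ := Ideal.Quotient.mk_surjective a
  obtain ⟨b, rfl⟩ := Ideal.Quotient.mk_surjective b
  have hsub : a - b ∈ I ⊔ J := by
    simpa only [Ideal.Quotient.factor_mk, Ideal.Quotient.eq] using hab
  obtain ⟨u, hu, v, hv, huv⟩ := Submodule.mem_sup.1 hsub
  have hshift : a - u = b + v := by linear_combination -huv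
  refine ⟨Ideal.Quotient.mk _ (a - u), ?_, ?_⟩
  · simpa only [Ideal.Quotient.factor_mk, Ideal.Quotient.eq, sub_sub_cancel_left, neg_mem_iff]
      using hu
  · simpa only [hshift, Ideal.Quotient.factor_mk, Ideal.Quotient.eq, add_sub_cancel_left] using hv

theorem eq_of_factor_inf_eq {r s : R ⧸ I ⊓ J}
    (hI : Ideal.Quotient.factor (inf_le_left : I ⊓ J ≤ I) r = Ideal.Quotient.factor inf_le_left s)
    (hJ : Ideal.Quotient.factor (inf_le_right : I ⊓ J ≤ J) r =
      Ideal.Quotient.factor inf_le_right s) :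
    r = s := by
  obtain ⟨r, rfl⟩ := Ideal.Quotient.mk_surjective r
  obtain ⟨s, rfl⟩ := Ideal.Quotient.mk_surjective s
  simp only [Ideal.Quotient.factor_mk, Ideal.Quotient.eq] at hI hJ
  exact Ideal.Quotient.eq.2 ⟨hI, hJ⟩

theorem exists_matrix_map_factor_inf_eq {m n : Type*}
    {A : Matrix m n (R ⧸ I)} {B : Matrix m n (R ⧸ J)}
    (hAB : A.map (Ideal.Quotient.factor (le_sup_left : I ≤ I ⊔ J)) =
      B.map (Ideal.Quotient.factor (le_sup_right : J ≤ I ⊔ J))) :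
    ∃ C : Matrix m n (R ⧸ I ⊓ J), C.map (Ideal.Quotient.factor inf_le_left) = A ∧
      C.map (Ideal.Quotient.factor inf_le_right) = B := by
  choose c hcA hcB using fun i j ↦ exists_factor_inf_eq (congr_fun₂ hAB i j)
  exact ⟨of c, ext hcA, ext hcB⟩

theorem exists_specialLinearGroup_map_factor_inf_eq {n : Type*} [Fintype n] [DecidableEq n]
    {x : SpecialLinearGroup n (R ⧸ I)} {y : SpecialLinearGroup n (R ⧸ J)}
    (hxy : SpecialLinearGroup.map (Ideal.Quotient.factor (le_sup_left : I ≤ I ⊔ J)) x =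
      SpecialLinearGroup.map (Ideal.Quotient.factor (le_sup_right : J ≤ I ⊔ J)) y) :
    ∃ z : SpecialLinearGroup n (R ⧸ I ⊓ J),
      SpecialLinearGroup.map (Ideal.Quotient.factor inf_le_left) z = x ∧
      SpecialLinearGroup.map (Ideal.Quotient.factor inf_le_right) z = y := by
  obtain ⟨C, hCx, hCy⟩ := exists_matrix_map_factor_inf_eq (congrArg Subtype.val hxy)
  have hdet : C.det = 1 := by
    apply eq_of_factor_inf_eq
    · rw [RingHom.map_det, RingHom.mapMatrix_apply, hCx, x.det_coe, map_one]
    · rw [RingHom.map_det, RingHom.mapMatrix_apply, hCy, y.det_coe, map_one]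
  exact ⟨⟨C, hdet⟩, Subtype.ext hCx, Subtype.ext hCy⟩

end Gluing

theorem specialLinearGroup_map_surjective {R S : Type*} [CommRing R] [CommRing S]
    {n : Type*} [Fintype n] [DecidableEq n] {f : R →+* S} [IsLocalHom f]
    (hf : Function.Surjective f) :
    Function.Surjective (SpecialLinearGroup.map (n := n) f) := by
  intro x
  obtain _ | ⟨⟨i⟩⟩ := isEmpty_or_nonempty n
  · exact ⟨1, Subsingleton.elim _ _⟩
  obtain ⟨B, hB⟩ : ∃ B : Matrix n n R, B.map f = x :=
    ⟨x.1.map (Function.surjInv hf), ext fun _ _ ↦ Function.surjInv_eq hf _⟩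
  have hdet : f B.det = 1 := by rw [RingHom.map_det, RingHom.mapMatrix_apply, hB, x.det_coe]
  obtain ⟨d, hd⟩ := (IsUnit.of_map f B.det (hdet ▸ isUnit_one)).exists_left_inv
  have hfd : f d = 1 := by simpa only [map_mul, hdet, mul_one, map_one] using congrArg f hd
  have hscaled : (B.updateRow i (d • B i)).det = 1 := by
    rw [det_updateRow_smul, updateRow_eq_self, hd]
  refine ⟨⟨B.updateRow i (d • B i), hscaled⟩, Subtype.ext ?_⟩
  have hrow : f ∘ (d • B i) = B.map f i := by
    ext j
    simp only [Function.comp_apply, Pi.smul_apply, smul_eq_mul, map_mul, hfd, one_mul, map_apply]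
  calc (B.updateRow i (d • B i)).map f
    _ = (B.map f).updateRow i (f ∘ (d • B i)) := map_updateRow ..
    _ = B.map f := by rw [hrow, updateRow_eq_self]
    _ = x := hB

theorem stmt_15_general {R : Type*} [CommRing R] {I J : Ideal R} {n : Type*} [Fintype n]
    [DecidableEq n] (hIJ : I ⊓ J ≤ Ideal.jacobson ⊥)
    {x : SpecialLinearGroup n (R ⧸ I)} {y : SpecialLinearGroup n (R ⧸ J)}
    (hxy : SpecialLinearGroup.map (Ideal.Quotient.factor (le_sup_left : I ≤ I ⊔ J)) x =
      SpecialLinearGroup.map (Ideal.Quotient.factor (le_sup_right : J ≤ I ⊔ J)) y) :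
    ∃ c : SpecialLinearGroup n R,
      SpecialLinearGroup.map (Ideal.Quotient.mk I) c = x ∧
      SpecialLinearGroup.map (Ideal.Quotient.mk J) c = y := by
  have : IsLocalHom (Ideal.Quotient.mk (I ⊓ J)) := isLocalHom_of_le_jacobson_bot _ hIJ
  obtain ⟨z, rfl, rfl⟩ := exists_specialLinearGroup_map_factor_inf_eq hxy
  obtain ⟨c, rfl⟩ := specialLinearGroup_map_surjective Ideal.Quotient.mk_surjective z
  exact ⟨c, rfl, rfl⟩

/-- Let `R` be a commutative local ring with maximal ideal `𝔪`, `I` an ideal of `R`, and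
`n, k ≥ 1`.  Every `x ∈ SL_n(R ⧸ I)` whose image in `SL_n(R ⧸ (I ⊔ 𝔪^k))` is the
identity lifts to some `c ∈ SL_n(R)` which reduces to `x` modulo `I` and to the identity
modulo `𝔪^k`. -/
theorem stmt_15 (R : Type*) [CommRing R] [IsLocalRing R] (I : Ideal R) (n k : ℕ)
    (hn : 1 ≤ n) (hk : 1 ≤ k)
    (x : Matrix.SpecialLinearGroup (Fin n) (R ⧸ I))
    (hx : Matrix.SpecialLinearGroup.map
      (Ideal.Quotient.factor
        (le_sup_left : I ≤ I ⊔ (IsLocalRing.maximalIdeal R) ^ k)) x = 1) :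
    ∃ c : Matrix.SpecialLinearGroup (Fin n) R,
      Matrix.SpecialLinearGroup.map (Ideal.Quotient.mk I) c = x ∧
      Matrix.SpecialLinearGroup.map
        (Ideal.Quotient.mk ((IsLocalRing.maximalIdeal R) ^ k)) c = 1 := by
  have hle : I ⊓ IsLocalRing.maximalIdeal R ^ k ≤ Ideal.jacobson ⊥ :=
    inf_le_right.trans ((Ideal.pow_le_self (by lia)).trans (IsLocalRing.maximalIdeal_le_jacobson ⊥))
  exact stmt_15_general hle (hx.trans (map_one _).symm)
end

section
/- Let p be an odd prime and K a number field containing no primitive p-th root of unity. Let V = {α ∈ Kˣ : there exists a nonzero fractional ideal I of 𝓞_K with (α) = I^p}. Then the quotient group V/(Kˣ)^p is finite and its cardinality equals p^{r₁ + r₂ − 1} times the cardinality of the p-torsion subgroup Cl_K[p] = {c ∈ Cl_K : c^p = 1} of the class group, where r₁ and r₂ denote the number of real and complex places of K respectively. -/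
set_option autoImplicit false

open scoped nonZeroDivisors

/-!
Send `α ∈ Kˣ` to its fractional ideal `(α)`. Fractional ideals form a torsion-free group, so `V` is
the preimage of the `n`-th powers, and extracting the (unique) `n`-th root `I` of `(α)` maps `V`
onto the `n`-torsion of the class group, with kernel `(Kˣ)ⁿ 𝓞ˣ`. By torsion-freeness again
`(Kˣ)ⁿ ∩ 𝓞ˣ = (𝓞ˣ)ⁿ`, whence `[V : (Kˣ)ⁿ] = [𝓞ˣ : (𝓞ˣ)ⁿ] · #Cl[n]`. The first factor comes from
Dirichlet's unit theorem: a finitely generated abelian group `A` of rank `r` has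
`[A : Aⁿ] = nʳ · #A[n]`, and `𝓞ˣ[n]` is the group of `n`-th roots of unity of `K`, which is trivial
for prime `n` when `K` has no primitive `n`-th root of unity.
-/

section PowIndex

variable {G H J : Type*} [CommGroup G] [CommGroup H] [CommGroup J] {n : ℕ}

theorem map_range_powMonoidHom (f : G →* J) (n : ℕ) :
    (powMonoidHom n : G →* G).range.map f = f.range.map (powMonoidHom n) := by
  have hcomm : f.comp (powMonoidHom n) = (powMonoidHom n).comp f := by
    ext g
    exact map_pow f g n
  rw [MonoidHom.map_range, MonoidHom.map_range, hcomm]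

theorem index_range_powMonoidHom_congr (e : G ≃* H) (n : ℕ) :
    (powMonoidHom n : G →* G).range.index = (powMonoidHom n : H →* H).range.index := by
  rw [← e.map_range_powMonoidHom n, Subgroup.index_map_equiv]

theorem card_ker_powMonoidHom_congr (e : G ≃* H) (n : ℕ) :
    Nat.card (powMonoidHom n : G →* G).ker = Nat.card (powMonoidHom n : H →* H).ker :=
  Nat.card_congr <| e.toEquiv.subtypeEquiv fun g ↦ by
    simp [MonoidHom.mem_ker, ← map_pow]

theorem card_ker_powMonoidHom_of_ker_le {S : Subgroup G}
    (hS : (powMonoidHom n : G →* G).ker ≤ S) :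
    Nat.card (powMonoidHom n : S →* S).ker = Nat.card (powMonoidHom n : G →* G).ker := by
  have hker : (powMonoidHom n : S →* S).ker = (powMonoidHom n : G →* G).ker.subgroupOf S := by
    ext s
    simp [MonoidHom.mem_ker, Subgroup.mem_subgroupOf, Subtype.ext_iff]
  rw [hker]
  exact Nat.card_congr (Subgroup.subgroupOfEquivOfLe hS).toEquiv

theorem ker_powMonoidHom_le_torsion (hn : n ≠ 0) :
    (powMonoidHom n : G →* G).ker ≤ CommGroup.torsion G := fun _ hg ↦
  isOfFinOrder_iff_pow_eq_one.mpr ⟨n, hn.bot_lt, hg⟩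

section TorsionFree

variable [IsMulTorsionFree J]

theorem relIndex_range_powMonoidHom_ker (f : G →* J) (hn : n ≠ 0) :
    (powMonoidHom n : G →* G).range.relIndex f.ker =
      (powMonoidHom n : f.ker →* f.ker).range.index := by
  rw [Subgroup.relIndex]
  congr 1
  ext ⟨_, hu⟩
  constructor
  · rintro ⟨g, rfl⟩
    have hg : f g = 1 := by simpa [MonoidHom.mem_ker, hn] using hu
    exact ⟨⟨g, hg⟩, rfl⟩
  · rintro ⟨g, hg⟩
    exact ⟨g, congrArg Subtype.val hg⟩

theorem index_range_powMonoidHom_of_surjective {f : G →* J} (hf : Function.Surjective f)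
    (hn : n ≠ 0) :
    (powMonoidHom n : G →* G).range.index =
      (powMonoidHom n : J →* J).range.index * (powMonoidHom n : f.ker →* f.ker).range.index := by
  have hmap : (powMonoidHom n : G →* G).range.map f = (powMonoidHom n : J →* J).range := by
    rw [map_range_powMonoidHom, f.range_eq_top_of_surjective hf, ← MonoidHom.range_eq_map]
  have hJ : (powMonoidHom n : J →* J).range.index =
      ((powMonoidHom n : G →* G).range ⊔ f.ker).index := by
    rw [← hmap, Subgroup.index_map, f.range_eq_top_of_surjective hf, Subgroup.index_top, mul_one]
  rw [hJ, ← relIndex_range_powMonoidHom_ker f hn, ← Subgroup.relIndex_sup_left, mul_comm,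
    Subgroup.relIndex_mul_index le_sup_left]

-- Extracting `n`-th roots identifies `P ⊓ Jⁿ` with the preimage in `J` of the `n`-torsion of
-- `J ⧸ P`, and `Pⁿ` with `P`.
theorem relIndex_map_powMonoidHom_inf_range (P : Subgroup J) (hn : n ≠ 0) :
    (P.map (powMonoidHom n)).relIndex (P ⊓ (powMonoidHom n : J →* J).range) =
      Nat.card (powMonoidHom n : J ⧸ P →* J ⧸ P).ker := by
  have hinj : Function.Injective (powMonoidHom n : J →* J) := pow_left_injective hn
  have htors : (P.comap (powMonoidHom n)).map (QuotientGroup.mk' P) =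
      (powMonoidHom n : J ⧸ P →* J ⧸ P).ker := by
    rw [← Subgroup.map_comap_eq_self_of_surjective (QuotientGroup.mk'_surjective P)
      (powMonoidHom n : J ⧸ P →* J ⧸ P).ker]
    congr 1
    ext x
    simp [MonoidHom.mem_ker, ← QuotientGroup.mk_pow]
  calc (P.map (powMonoidHom n)).relIndex (P ⊓ (powMonoidHom n : J →* J).range)
      = (P.map (powMonoidHom n)).relIndex ((P.comap (powMonoidHom n)).map (powMonoidHom n)) := by
        rw [Subgroup.map_comap_eq, inf_comm]
    _ = (QuotientGroup.mk' P).ker.relIndex (P.comap (powMonoidHom n)) := by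
        rw [Subgroup.relIndex_map_map_of_injective _ _ hinj, QuotientGroup.ker_mk']
    _ = Nat.card (powMonoidHom n : J ⧸ P →* J ⧸ P).ker := by
        rw [Subgroup.relIndex_ker, htors]

theorem relIndex_range_powMonoidHom_comap (f : G →* J) (hn : n ≠ 0) :
    (powMonoidHom n : G →* G).range.relIndex ((powMonoidHom n : J →* J).range.comap f) =
      (powMonoidHom n : f.ker →* f.ker).range.index *
        Nat.card (powMonoidHom n : J ⧸ f.range →* J ⧸ f.range).ker := by
  set Gn := (powMonoidHom n : G →* G).range
  set V := (powMonoidHom n : J →* J).range.comap f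
  have hGnV : Gn ≤ V := by
    rintro _ ⟨g, rfl⟩
    exact ⟨f g, (map_pow f g n).symm⟩
  have hker : f.ker ≤ V := Subgroup.ker_le_comap f _
  have hV : (Gn ⊔ f.ker).relIndex V =
      Nat.card (powMonoidHom n : J ⧸ f.range →* J ⧸ f.range).ker := by
    rw [← relIndex_map_powMonoidHom_inf_range f.range hn, ← map_range_powMonoidHom,
      ← Subgroup.map_comap_eq, Subgroup.relIndex_map_map, sup_eq_left.mpr hker]
  rw [← Subgroup.relIndex_mul_relIndex _ _ _ le_sup_left (sup_le hGnV hker),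
    Subgroup.relIndex_sup_left, relIndex_range_powMonoidHom_ker f hn, hV]

end TorsionFree

variable (G) in
theorem finite_torsion_of_fg [Group.FG G] : Finite (CommGroup.torsion G) := by
  have hfg : (CommGroup.torsion G).toAddSubgroup.toIntSubmodule.FG := IsNoetherian.noetherian _
  rw [Submodule.fg_iff_addSubgroup_fg, AddSubgroup.toIntSubmodule_toAddSubgroup,
    ← Subgroup.fg_iff_add_fg, ← Group.fg_iff_subgroup_fg] at hfg
  exact CommGroup.finite_of_fg_isMulTorsion _ CommMonoid.torsion.isMulTorsion

theorem index_range_powMonoidHom_of_fg [Group.FG G] (hn : n ≠ 0) :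
    (powMonoidHom n : G →* G).range.index =
      n ^ Module.finrank ℤ (Additive (G ⧸ CommGroup.torsion G)) *
        Nat.card (powMonoidHom n : G →* G).ker := by
  have := finite_torsion_of_fg G
  have hfree : (powMonoidHom n : G ⧸ CommGroup.torsion G →* _).range.index =
      n ^ Module.finrank ℤ (Additive (G ⧸ CommGroup.torsion G)) :=
    AddSubgroup.index_range_nsmul (Additive (G ⧸ CommGroup.torsion G)) n
  rw [index_range_powMonoidHom_of_surjective (QuotientGroup.mk'_surjective (CommGroup.torsion G))
    hn, hfree, QuotientGroup.ker_mk', Subgroup.index_range,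
    card_ker_powMonoidHom_of_ker_le (ker_powMonoidHom_le_torsion hn)]

end PowIndex

theorem rootsOfUnity_prime_eq_bot {M : Type*} [CommMonoid M] {p : ℕ} (hp : p.Prime)
    (h : ∀ ζ : M, ¬ IsPrimitiveRoot ζ p) : rootsOfUnity p M = ⊥ := by
  refine (Subgroup.eq_bot_iff_forall _).mpr fun ζ hζ ↦ by_contra fun hne ↦ h ζ ?_
  have := Fact.mk hp
  rw [IsPrimitiveRoot.coe_units_iff, ← orderOf_eq_prime hζ hne]
  exact IsPrimitiveRoot.orderOf ζ

section FractionRing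

variable {R K : Type*} [CommRing R] [Field K] [Algebra R K] [IsFractionRing R K]

theorem card_rootsOfUnity_fractionRing [IsIntegrallyClosed R] {n : ℕ} (hn : n ≠ 0) :
    Nat.card (rootsOfUnity n R) = Nat.card (rootsOfUnity n K) := by
  have : NeZero n := ⟨hn⟩
  have hinj : Function.Injective (algebraMap R K) := FaithfulSMul.algebraMap_injective R K
  refine Nat.card_eq_of_bijective (restrictRootsOfUnity (algebraMap R K) n) ⟨?_, fun ζ ↦ ?_⟩
  · intro ζ ξ h
    apply rootsOfUnity.coe_injective
    apply hinj
    simpa using congrArg (fun x : rootsOfUnity n K ↦ ((x : Kˣ) : K)) h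
  · have hζ : ((ζ : Kˣ) : K) ^ n = 1 := (mem_rootsOfUnity' n _).mp ζ.2
    obtain ⟨a, ha⟩ := IsIntegrallyClosed.exists_algebraMap_eq_of_isIntegral_pow (R := R)
      hn.bot_lt (hζ ▸ isIntegral_one)
    have han : a ^ n = 1 := hinj (by rw [map_pow, ha, hζ, map_one])
    exact ⟨rootsOfUnity.mkOfPowEq a han, rootsOfUnity.coe_injective ha⟩

theorem ker_toPrincipalIdeal :
    (toPrincipalIdeal R K).ker = (Units.map (algebraMap R K : R →* K)).range := by
  ext x
  rw [MonoidHom.mem_ker, toPrincipalIdeal_eq_iff, ← FractionalIdeal.coeToSubmodule_inj]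
  simpa [Units.ext_iff, eq_comm] using Submodule.span_singleton_eq_one_iff

variable (R K) in
/-- The kernel of `x ↦ (x)` on `Kˣ` is the unit group `Rˣ`. -/
noncomputable def kerToPrincipalIdealEquiv : (toPrincipalIdeal R K).ker ≃* Rˣ :=
  (MulEquiv.subgroupCongr ker_toPrincipalIdeal).trans
    (MonoidHom.ofInjective (Units.map_injective (FaithfulSMul.algebraMap_injective R K))).symm

end FractionRing

section Dedekind

variable {R K : Type*} [CommRing R] [IsDedekindDomain R] [Field K] [Algebra R K]
  [IsFractionRing R K]

instance : IsMulTorsionFree (FractionalIdeal R⁰ K)ˣ := by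
  refine .of_not_isOfFinOrder fun I hne hfin ↦ hne ?_
  obtain ⟨n, hn, hI⟩ := isOfFinOrder_iff_pow_eq_one.mp hfin
  have hcount (v : IsDedekindDomain.HeightOneSpectrum R) :
      FractionalIdeal.count K v (I : FractionalIdeal R⁰ K) = 0 := by
    have h := FractionalIdeal.count_pow K v n (I : FractionalIdeal R⁰ K)
    rw [← Units.val_pow_eq_pow_val, hI, Units.val_one, FractionalIdeal.count_one] at h
    simpa [hn.ne'] using h.symm
  ext1
  rw [← FractionalIdeal.finprod_heightOneSpectrum_factorization' K I.ne_zero]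
  simp [hcount]

theorem relIndex_range_powMonoidHom_comap_toPrincipalIdeal {n : ℕ} (hn : n ≠ 0) :
    (powMonoidHom n : Kˣ →* Kˣ).range.relIndex
        ((powMonoidHom n).range.comap (toPrincipalIdeal R K)) =
      (powMonoidHom n : Rˣ →* Rˣ).range.index *
        Nat.card (powMonoidHom n : ClassGroup R →* ClassGroup R).ker := by
  rw [relIndex_range_powMonoidHom_comap _ hn,
    index_range_powMonoidHom_congr (kerToPrincipalIdealEquiv R K),
    card_ker_powMonoidHom_congr (ClassGroup.equiv K).symm]

end Dedekind

theorem index_range_powMonoidHom_units_ringOfIntegers (K : Type*) [Field K] [NumberField K]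
    {n : ℕ} (hn : n ≠ 0) :
    (powMonoidHom n : (NumberField.RingOfIntegers K)ˣ →* _).range.index =
      n ^ NumberField.Units.rank K * Nat.card (rootsOfUnity n K) := by
  have : Group.FG (NumberField.RingOfIntegers K)ˣ := Group.fg_iff_monoid_fg.mpr inferInstance
  have hrank := NumberField.Units.finrank_modTorsion K
  rw [NumberField.Units.torsion] at hrank
  rw [index_range_powMonoidHom_of_fg hn, hrank, ← rootsOfUnity_eq_ker,
    card_rootsOfUnity_fractionRing (K := K) hn]

theorem stmt_17_general (n : ℕ) (hn : n ≠ 0)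
    (K : Type*) [Field K] [NumberField K]
    (V : Subgroup Kˣ)
    (hV : ∀ α : Kˣ, α ∈ V ↔
      ∃ I : (FractionalIdeal (NumberField.RingOfIntegers K)⁰ K)ˣ,
        FractionalIdeal.spanSingleton (NumberField.RingOfIntegers K)⁰ (α : K) =
          (I : FractionalIdeal (NumberField.RingOfIntegers K)⁰ K) ^ n) :
    Finite (V ⧸ ((powMonoidHom n : Kˣ →* Kˣ).range.subgroupOf V)) ∧
    Nat.card (V ⧸ ((powMonoidHom n : Kˣ →* Kˣ).range.subgroupOf V)) =
      n ^ (NumberField.InfinitePlace.nrRealPlaces K +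
          NumberField.InfinitePlace.nrComplexPlaces K - 1) *
        Nat.card (rootsOfUnity n K) *
        Nat.card {c : ClassGroup (NumberField.RingOfIntegers K) // c ^ n = 1} := by
  have hVcomap : V = (powMonoidHom n).range.comap
      (toPrincipalIdeal (NumberField.RingOfIntegers K) K) := by
    ext α
    simp [hV, eq_comm, Units.ext_iff]
  have hcard : Nat.card (V ⧸ ((powMonoidHom n : Kˣ →* Kˣ).range.subgroupOf V)) =
      n ^ NumberField.Units.rank K * Nat.card (rootsOfUnity n K) *
        Nat.card (powMonoidHom n : ClassGroup (NumberField.RingOfIntegers K) →* _).ker := by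
    rw [hVcomap, ← index_range_powMonoidHom_units_ringOfIntegers K hn]
    exact relIndex_range_powMonoidHom_comap_toPrincipalIdeal hn
  have : NeZero n := ⟨hn⟩
  have hfin : Finite (V ⧸ ((powMonoidHom n : Kˣ →* Kˣ).range.subgroupOf V)) := by
    apply Nat.finite_of_card_ne_zero
    rw [hcard]
    exact mul_ne_zero (mul_ne_zero (pow_ne_zero _ hn) Nat.card_pos.ne') Nat.card_pos.ne'
  rw [NumberField.Units.rank,
    NumberField.InfinitePlace.card_eq_nrRealPlaces_add_nrComplexPlaces] at hcard
  exact ⟨hfin, hcard⟩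

/-- Let `p` be an odd prime and `K` a number field containing no primitive `p`-th root of
unity.  With `V = {α ∈ Kˣ : (α) = I^p for some nonzero fractional ideal I}`, the quotient
`V/(Kˣ)^p` is finite of cardinality `p^(r₁ + r₂ - 1) · #Cl_K[p]`, where `r₁`, `r₂` are
the numbers of real and complex places of `K`. -/
theorem stmt_17 (p : ℕ) (hp : p.Prime) (hodd : Odd p)
    (K : Type*) [Field K] [NumberField K]
    (hmu : ∀ ζ : K, ¬ IsPrimitiveRoot ζ p)
    (V : Subgroup Kˣ)
    (hV : ∀ α : Kˣ, α ∈ V ↔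
      ∃ I : (FractionalIdeal (NumberField.RingOfIntegers K)⁰ K)ˣ,
        FractionalIdeal.spanSingleton (NumberField.RingOfIntegers K)⁰ (α : K) =
          (I : FractionalIdeal (NumberField.RingOfIntegers K)⁰ K) ^ p) :
    Finite (V ⧸ ((powMonoidHom p : Kˣ →* Kˣ).range.subgroupOf V)) ∧
    Nat.card (V ⧸ ((powMonoidHom p : Kˣ →* Kˣ).range.subgroupOf V)) =
      p ^ (NumberField.InfinitePlace.nrRealPlaces K +
          NumberField.InfinitePlace.nrComplexPlaces K - 1) *
        Nat.card {c : ClassGroup (NumberField.RingOfIntegers K) // c ^ p = 1} := by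
  simpa [rootsOfUnity_prime_eq_bot hp hmu] using stmt_17_general p hp.ne_zero K V hV
end
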